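/- Let the compact set A and lower semicontinuous kernel K satisfy assumptions (A1)-(A4). Let {a_n}_{n≥1} be any sequence in A such that lim_{n→∞} (1/(n−1))·Σ_{i=1}^{n−1} K(a_n, a_i) = W_K and such that (1/(n−1))·Σ_{i=1}^{n−1} K(a_n, a_i) = P((a_1,…,a_{n−1})) for each n > 1 (e.g., a greedy energy sequence). Then the normalized counting measures (1/N)·Σ_{i=1}^{N} δ_{a_i} converge weakly to μ_eq as N → ∞. -/

import Mathlib

open MeasureTheory Filter Topology BoundedContinuousFunction NNReal ENNReal

noncomputable section

/-- The potential of a measure `μ` with respect to the kernel `K x y = f (nndist x y)`. -/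
def potential {t : ℕ} (f : ℝ≥0 → ℝ≥0∞) (μ : Measure (EuclideanSpace ℝ (Fin t)))
    (x : EuclideanSpace ℝ (Fin t)) : ℝ≥0∞ :=
  ∫⁻ y, f (nndist x y) ∂μ

/-- The energy `I[μ] = ∫∫ K(x,y) dμ(x) dμ(y)`. -/
def energy {t : ℕ} (f : ℝ≥0 → ℝ≥0∞) (μ : Measure (EuclideanSpace ℝ (Fin t))) : ℝ≥0∞ :=
  ∫⁻ x, potential f μ x ∂μ

/-- The normalized discrete potential `(1/N) ∑_{y ∈ ω} K(x,y)` of a configuration. -/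
def discretePotential {t : ℕ} (f : ℝ≥0 → ℝ≥0∞) {N : ℕ}
    (ω : Fin N → EuclideanSpace ℝ (Fin t)) (x : EuclideanSpace ℝ (Fin t)) : ℝ≥0∞ :=
  (N : ℝ≥0∞)⁻¹ * ∑ i, f (nndist x (ω i))

/-- The polarization `P(ω) = min_{x ∈ A} (1/N) ∑_{y ∈ ω} K(x,y)` of a configuration. -/
def polarization {t : ℕ} (f : ℝ≥0 → ℝ≥0∞) (A : Set (EuclideanSpace ℝ (Fin t))) {N : ℕ}
    (ω : Fin N → EuclideanSpace ℝ (Fin t)) : ℝ≥0∞ :=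
  ⨅ x ∈ A, discretePotential f ω x

/-- The optimal `N`-point polarization `𝒫(A,N)`. -/
def maxPolarization {t : ℕ} (f : ℝ≥0 → ℝ≥0∞) (A : Set (EuclideanSpace ℝ (Fin t)))
    (N : ℕ) : ℝ≥0∞ :=
  ⨆ (ω : Fin N → EuclideanSpace ℝ (Fin t)) (_ : ∀ i, ω i ∈ A), polarization f A ω

/-- The normalized counting measure of a configuration. -/
def countingMeasure {t : ℕ} {N : ℕ} (ω : Fin N → EuclideanSpace ℝ (Fin t)) :
    Measure (EuclideanSpace ℝ (Fin t)) :=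
  (N : ℝ≥0∞)⁻¹ • ∑ i, Measure.dirac (ω i)

/-- Weak convergence of a sequence of measures: integrals of every bounded continuous
function converge. -/
def WeaklyTendsto {t : ℕ} (ν : ℕ → Measure (EuclideanSpace ℝ (Fin t)))
    (μ : Measure (EuclideanSpace ℝ (Fin t))) : Prop :=
  ∀ g : EuclideanSpace ℝ (Fin t) →ᵇ ℝ,
    Tendsto (fun N => ∫ x, g x ∂(ν N)) atTop (𝓝 (∫ x, g x ∂μ))

/-! For every truncation `K ∧ M` the self-interaction of the atoms of the normalized counting
measure `ν_N` of `a_0, …, a_{N-1}` contributes at most `M / N` to its energy, and by symmetry the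
rest is `2 / N²` times the sum of the interactions of each `a_n` with its predecessors. If these
interactions are asymptotically at most `n * I[μ]`, then the `limsup` of the truncated energies of
`ν_N` is at most `I[μ]`. The energy of a lower semicontinuous kernel is lower semicontinuous in the
weak topology, so every cluster point `ν` of `(ν_N)` has truncated energies at most `I[μ]`; letting
`M → ∞` gives `I[ν] ≤ I[μ]`, whence `ν = μ`. The probability measures carried by `A` form a compact
set, so a unique cluster point is a limit. -/

section Topology

lemma le_limsup_of_lowerSemicontinuousAt_of_mapClusterPt {Y ι γ : Type*} [TopologicalSpace Y]
    [CompleteLinearOrder γ] {F : Y → γ} {y : Y} {l : Filter ι} {u : ι → Y}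
    (hF : LowerSemicontinuousAt F y) (hy : MapClusterPt y l u) :
    F y ≤ limsup (F ∘ u) l :=
  have : NeBot (𝓝 y ⊓ map u l) := hy
  calc F y ≤ liminf F (𝓝 y) := hF.le_liminf
    _ ≤ liminf F (𝓝 y ⊓ map u l) := liminf_le_liminf_of_le inf_le_left
    _ ≤ limsup F (𝓝 y ⊓ map u l) := liminf_le_limsup
    _ ≤ limsup F (map u l) := limsup_le_limsup_of_le inf_le_right
    _ = limsup (F ∘ u) l := (limsup_comp F u l).symm

lemma isCompact_setOfPred_probabilityMeasure_compl_eq_zero {X : Type*} [TopologicalSpace X]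
    [T2Space X] [MeasurableSpace X] [BorelSpace X] {A : Set X} (hA : IsCompact A) :
    IsCompact {μ : ProbabilityMeasure X | (μ : Measure X) Aᶜ = 0} := by
  simpa using isCompact_setOfPred_probabilityMeasure_mass_eq_compl_isCompact_le
    (tendsto_const_nhds (x := (0 : ℝ≥0))) (fun _ : ℕ => hA) (.inr monotone_const)

end Topology

section LowerSemicontinuity

lemma volume_setOfPred_pos_ofReal_lt (c : ℝ≥0∞) :
    volume {s : ℝ | 0 < s ∧ ENNReal.ofReal s < c} = c := by
  rcases eq_or_ne c ⊤ with rfl | hc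
  · simpa only [ENNReal.ofReal_lt_top, and_true] using! Real.volume_Ioi (a := 0)
  · have : {s : ℝ | 0 < s ∧ ENNReal.ofReal s < c} = Set.Ioo 0 c.toReal := by
      ext s
      exact and_congr_right fun hs => ENNReal.ofReal_lt_iff_lt_toReal hs.le hc
    simp [this, hc]

lemma lintegral_eq_lintegral_meas_ofReal_lt {X : Type*} [MeasurableSpace X] (μ : Measure X)
    [SFinite μ] {g : X → ℝ≥0∞} (hg : Measurable g) :
    ∫⁻ x, g x ∂μ = ∫⁻ s in Set.Ioi (0 : ℝ), μ {x | ENNReal.ofReal s < g x} := by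
  have hmeas : MeasurableSet {p : X × ℝ | 0 < p.2 ∧ ENNReal.ofReal p.2 < g p.1} :=
    (measurableSet_lt measurable_const measurable_snd).inter
      (measurableSet_lt (ENNReal.measurable_ofReal.comp measurable_snd) (hg.comp measurable_fst))
  calc ∫⁻ x, g x ∂μ = ∫⁻ x, volume {s : ℝ | 0 < s ∧ ENNReal.ofReal s < g x} ∂μ := by
        simp only [volume_setOfPred_pos_ofReal_lt]
    _ = ∫⁻ s : ℝ, μ {x | 0 < s ∧ ENNReal.ofReal s < g x} :=
        (Measure.prod_apply hmeas).symm.trans (Measure.prod_apply_symm hmeas)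
    _ = ∫⁻ s in Set.Ioi (0 : ℝ), μ {x | ENNReal.ofReal s < g x} := by
        rw [← lintegral_indicator measurableSet_Ioi]
        refine lintegral_congr fun s => ?_
        by_cases hs : 0 < s <;> simp [hs]

lemma lowerSemicontinuous_lintegral {X : Type*} [TopologicalSpace X]
    [TopologicalSpace.PseudoMetrizableSpace X] [TopologicalSpace.SeparableSpace X]
    [MeasurableSpace X] [OpensMeasurableSpace X] {g : X → ℝ≥0∞} (hg : LowerSemicontinuous g) :
    LowerSemicontinuous fun μ : ProbabilityMeasure X => ∫⁻ x, g x ∂(μ : Measure X) := by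
  refine lowerSemicontinuous_iff_le_liminf.2 fun μ => ?_
  simp only [lintegral_eq_lintegral_meas_ofReal_lt _ hg.measurable]
  calc ∫⁻ s in Set.Ioi (0 : ℝ), (μ : Measure X) {x | ENNReal.ofReal s < g x}
      ≤ ∫⁻ s in Set.Ioi (0 : ℝ),
          liminf (fun ν : ProbabilityMeasure X => (ν : Measure X) {x | ENNReal.ofReal s < g x})
            (𝓝 μ) :=
        lintegral_mono fun s => ProbabilityMeasure.le_liminf_measure_open_of_tendsto tendsto_id
          (hg.isOpen_preimage _)
    _ ≤ _ := lintegral_liminf_le fun ν => Antitone.measurable fun r s hrs =>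
        measure_mono fun x hx => (ENNReal.ofReal_le_ofReal hrs).trans_lt hx

end LowerSemicontinuity

/-- The energy `∫∫ K(x, y) dμ(y) dμ(x)` of a measure for a general kernel `K`; `energy f` is the
case of the radial kernel `f (nndist x y)`. -/
def kernelEnergy {X : Type*} [MeasurableSpace X] (K : X → X → ℝ≥0∞) (μ : Measure X) : ℝ≥0∞ :=
  ∫⁻ x, ∫⁻ y, K x y ∂μ ∂μ

/-- The normalized counting measure of the first `N + 1` terms of a sequence; the shift makes it a
probability measure for every `N`. -/
def empiricalMeasure {X : Type*} [MeasurableSpace X] (a : ℕ → X) (N : ℕ) :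
    ProbabilityMeasure X where
  val := ((N + 1 : ℕ) : ℝ≥0∞)⁻¹ • ∑ i : Fin (N + 1), Measure.dirac (a i)
  property := ⟨by
    simpa using ENNReal.inv_mul_cancel (Nat.cast_ne_zero.2 N.succ_ne_zero)
      (ENNReal.natCast_ne_top (N + 1))⟩

section Energy

variable {X : Type*} [MeasurableSpace X] {K : X → X → ℝ≥0∞}

lemma kernelEnergy_eq_lintegral_prod {μ : Measure X} [SFinite μ]
    (hK : Measurable (Function.uncurry K)) :
    kernelEnergy K μ = ∫⁻ p, Function.uncurry K p ∂(μ.prod μ) :=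
  (lintegral_prod _ hK.aemeasurable).symm

lemma kernelEnergy_eq_iSup_min {μ : Measure X} [SFinite μ]
    (hK : Measurable (Function.uncurry K)) :
    kernelEnergy K μ = ⨆ M : ℕ, kernelEnergy (fun x y => min (K x y) M) μ := by
  have hmin (M : ℕ) : Measurable fun p : X × X => min (Function.uncurry K p) M :=
    hK.min measurable_const
  have hsup (c : ℝ≥0∞) : ⨆ M : ℕ, min c (M : ℝ≥0∞) = c := by
    rw [← inf_iSup_eq, ENNReal.iSup_natCast, inf_top_eq]
  calc kernelEnergy K μ = ∫⁻ p, ⨆ M : ℕ, min (Function.uncurry K p) M ∂(μ.prod μ) := by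
        simp only [hsup, kernelEnergy_eq_lintegral_prod hK]
    _ = ⨆ M : ℕ, ∫⁻ p, min (Function.uncurry K p) M ∂(μ.prod μ) :=
        lintegral_iSup hmin fun _ _ hM _ => min_le_min le_rfl (Nat.cast_le.2 hM)
    _ = ⨆ M : ℕ, kernelEnergy (fun x y => min (K x y) M) μ :=
        iSup_congr fun M => (kernelEnergy_eq_lintegral_prod (K := fun x y => min (K x y) M)
          (hmin M)).symm

lemma lowerSemicontinuous_kernelEnergy [TopologicalSpace X]
    [TopologicalSpace.PseudoMetrizableSpace X] [SecondCountableTopology X]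
    [OpensMeasurableSpace X] (hK : LowerSemicontinuous (Function.uncurry K)) :
    LowerSemicontinuous fun μ : ProbabilityMeasure X => kernelEnergy K μ := by
  simp only [kernelEnergy_eq_lintegral_prod hK.measurable]
  exact (lowerSemicontinuous_lintegral hK).comp
    (ProbabilityMeasure.continuous_prod.comp (continuous_id.prodMk continuous_id))

end Energy

section EmpiricalMeasure

lemma sum_range_sum_range_le_of_symm {R : Type*} [CommSemiring R] [PartialOrder R]
    [CanonicallyOrderedAdd R] {h : ℕ → ℕ → R} (hsymm : ∀ i j, h i j = h j i)
    {W C : R} (hrow : ∀ n : ℕ, ∑ j ∈ Finset.range (n + 1), h n j ≤ n * W + C) (N : ℕ) :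
    ∑ i ∈ Finset.range N, ∑ j ∈ Finset.range N, h i j ≤ N * N * W + 2 * N * C := by
  induction N with
  | zero => simp
  | succ N ih =>
    have hcol : ∑ i ∈ Finset.range N, h i N ≤ N * W + C := by
      simp only [hsymm _ N]
      exact (Finset.sum_range_succ (h N) N ▸ le_self_add).trans (hrow N)
    calc ∑ i ∈ Finset.range (N + 1), ∑ j ∈ Finset.range (N + 1), h i j
        = ∑ i ∈ Finset.range N, ∑ j ∈ Finset.range N, h i j + ∑ i ∈ Finset.range N, h i N
            + ∑ j ∈ Finset.range (N + 1), h N j := by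
          rw [Finset.sum_range_succ, ← Finset.sum_add_distrib]
          simp only [Finset.sum_range_succ]
      _ ≤ N * N * W + 2 * N * C + (N * W + C) + (N * W + C) := by
          gcongr
          exact hrow N
      _ ≤ N * N * W + 2 * N * C + (N * W + C) + (N * W + C) + W := le_self_add
      _ = (N + 1 : ℕ) * (N + 1 : ℕ) * W + 2 * (N + 1 : ℕ) * C := by
          push_cast
          ring

lemma exists_sum_range_succ_le_of_limsup_lt {h : ℕ → ℕ → ℝ≥0∞} {C W : ℝ≥0∞} (hC : C ≠ ⊤)
    (hbdd : ∀ i j, h i j ≤ C)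
    (hlim : limsup (fun n : ℕ => (n : ℝ≥0∞)⁻¹ * ∑ j ∈ Finset.range n, h n j) atTop < W) :
    ∃ D ≠ ⊤, ∀ n : ℕ, ∑ j ∈ Finset.range (n + 1), h n j ≤ n * W + D := by
  obtain ⟨m, hm⟩ := eventually_atTop.1 (eventually_lt_of_limsup_lt hlim)
  refine ⟨(m + 1 : ℕ) * C, ENNReal.mul_ne_top (ENNReal.natCast_ne_top _) hC, fun n => ?_⟩
  rcases le_or_gt m n with hmn | hnm
  · have hsum : ∑ j ∈ Finset.range n, h n j ≤ n * W := by
      rcases eq_or_ne n 0 with rfl | hn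
      · simp
      · exact (ENNReal.inv_mul_le_iff (Nat.cast_ne_zero.2 hn) (ENNReal.natCast_ne_top n)).1
          (hm n hmn).le
    have hdiag : h n n ≤ (m + 1 : ℕ) * C :=
      (hbdd n n).trans (le_mul_of_one_le_left' (by simp))
    exact Finset.sum_range_succ (h n) n ▸ add_le_add hsum hdiag
  · calc ∑ j ∈ Finset.range (n + 1), h n j ≤ (n + 1 : ℕ) * C := by
          simpa using Finset.sum_le_card_nsmul (Finset.range (n + 1)) (h n) C fun j _ => hbdd n j
      _ ≤ (m + 1 : ℕ) * C := by gcongr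
      _ ≤ n * W + (m + 1 : ℕ) * C := le_add_self

variable {X : Type*} [MeasurableSpace X] {K : X → X → ℝ≥0∞}

lemma lintegral_empiricalMeasure [MeasurableSingletonClass X] (a : ℕ → X) (N : ℕ)
    (g : X → ℝ≥0∞) :
    ∫⁻ x, g x ∂(empiricalMeasure a N : Measure X) =
      ((N + 1 : ℕ) : ℝ≥0∞)⁻¹ * ∑ i ∈ Finset.range (N + 1), g (a i) := by
  simp [empiricalMeasure, lintegral_finsetSum_measure, Finset.sum_range]

lemma empiricalMeasure_compl_eq_zero {A : Set X} (hA : MeasurableSet A) {a : ℕ → X}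
    (ha : ∀ n, a n ∈ A) (N : ℕ) : (empiricalMeasure a N : Measure X) Aᶜ = 0 := by
  simp [empiricalMeasure, Measure.dirac_apply' _ hA.compl, ha]

lemma limsup_kernelEnergy_empiricalMeasure_le [MeasurableSingletonClass X]
    (hsymm : ∀ x y, K x y = K y x) {C W : ℝ≥0∞} (hC : C ≠ ⊤) (hbdd : ∀ x y, K x y ≤ C)
    {a : ℕ → X}
    (hlim : limsup (fun n : ℕ => (n : ℝ≥0∞)⁻¹ * ∑ i ∈ Finset.range n, K (a n) (a i)) atTop ≤ W) :
    limsup (fun N => kernelEnergy K (empiricalMeasure a N)) atTop ≤ W := by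
  refine le_of_forall_gt_imp_ge_of_dense fun V hV => ?_
  obtain ⟨D, hD, hrow⟩ := exists_sum_range_succ_le_of_limsup_lt hC
    (fun i j => hbdd (a i) (a j)) (hlim.trans_lt hV)
  have henergy (N : ℕ) : kernelEnergy K (empiricalMeasure a N) ≤
      V + ((N + 1 : ℕ) : ℝ≥0∞)⁻¹ * (2 * D) := by
    have hinv : ((N + 1 : ℕ) : ℝ≥0∞)⁻¹ * (N + 1 : ℕ) = 1 :=
      ENNReal.inv_mul_cancel (Nat.cast_ne_zero.2 N.succ_ne_zero) (ENNReal.natCast_ne_top _)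
    simp only [kernelEnergy, lintegral_empiricalMeasure, ← Finset.mul_sum]
    generalize ((N + 1 : ℕ) : ℝ≥0∞)⁻¹ = r at hinv ⊢
    calc r * (r * ∑ i ∈ Finset.range (N + 1), ∑ j ∈ Finset.range (N + 1), K (a i) (a j))
        ≤ r * (r * ((N + 1 : ℕ) * (N + 1 : ℕ) * V + 2 * (N + 1 : ℕ) * D)) := by
          gcongr
          exact sum_range_sum_range_le_of_symm (fun i j => hsymm (a i) (a j)) hrow (N + 1)
      _ = (r * (N + 1 : ℕ)) * (r * (N + 1 : ℕ)) * V + (r * (N + 1 : ℕ)) * (r * (2 * D)) := by ring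
      _ = V + r * (2 * D) := by simp only [hinv, one_mul]
  have hzero : Tendsto (fun N : ℕ => V + ((N + 1 : ℕ) : ℝ≥0∞)⁻¹ * (2 * D)) atTop (𝓝 V) := by
    have hinv := ENNReal.tendsto_inv_nat_nhds_zero.comp (tendsto_add_atTop_nat 1)
    simpa using (ENNReal.Tendsto.mul_const hinv
      (.inr (ENNReal.mul_ne_top ENNReal.ofNat_ne_top hD))).const_add V
  exact (limsup_le_limsup (.of_forall henergy)).trans_eq hzero.limsup_eq

variable [TopologicalSpace X] [TopologicalSpace.MetrizableSpace X] [SecondCountableTopology X]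

lemma kernelEnergy_le_of_mapClusterPt_empiricalMeasure [OpensMeasurableSpace X]
    (hK : LowerSemicontinuous (Function.uncurry K)) (hsymm : ∀ x y, K x y = K y x)
    {a : ℕ → X} {W : ℝ≥0∞}
    (hlim : limsup (fun n : ℕ => (n : ℝ≥0∞)⁻¹ * ∑ i ∈ Finset.range n, K (a n) (a i)) atTop ≤ W)
    {ν : ProbabilityMeasure X} (hν : MapClusterPt ν atTop (empiricalMeasure a)) :
    kernelEnergy K ν ≤ W := by
  rw [kernelEnergy_eq_iSup_min hK.measurable]
  refine iSup_le fun M => ?_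
  have hlsc : LowerSemicontinuous (Function.uncurry fun x y => min (K x y) (M : ℝ≥0∞)) :=
    hK.inf lowerSemicontinuous_const
  have hlimM : limsup (fun n : ℕ =>
      (n : ℝ≥0∞)⁻¹ * ∑ i ∈ Finset.range n, min (K (a n) (a i)) M) atTop ≤ W := by
    refine (limsup_le_limsup (.of_forall fun n => ?_)).trans hlim
    gcongr
    exact min_le_left _ _
  calc kernelEnergy (fun x y => min (K x y) M) ν
      ≤ limsup (fun N => kernelEnergy (fun x y => min (K x y) M) (empiricalMeasure a N)) atTop :=
        le_limsup_of_lowerSemicontinuousAt_of_mapClusterPt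
          (F := fun ρ : ProbabilityMeasure X => kernelEnergy (fun x y => min (K x y) M) ρ)
          (lowerSemicontinuous_kernelEnergy hlsc ν) hν
    _ ≤ W := limsup_kernelEnergy_empiricalMeasure_le (fun x y => by rw [hsymm])
        (ENNReal.natCast_ne_top M) (fun x y => min_le_right _ _) hlimM

theorem greedy_points_equidistribute_general [BorelSpace X] {A : Set X} (hA : IsCompact A)
    (hK : LowerSemicontinuous (Function.uncurry K)) (hsymm : ∀ x y, K x y = K y x)
    {μ : ProbabilityMeasure X}
    (hμ : ∀ ν : ProbabilityMeasure X, (ν : Measure X) Aᶜ = 0 →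
      kernelEnergy K ν ≤ kernelEnergy K μ → ν = μ)
    {a : ℕ → X} (ha : ∀ n, a n ∈ A)
    (hlim : limsup (fun n : ℕ => (n : ℝ≥0∞)⁻¹ * ∑ i ∈ Finset.range n, K (a n) (a i)) atTop ≤
      kernelEnergy K μ) :
    Tendsto (empiricalMeasure a) atTop (𝓝 μ) :=
  (isCompact_setOfPred_probabilityMeasure_compl_eq_zero hA).tendsto_nhds_of_unique_mapClusterPt
    (.of_forall (empiricalMeasure_compl_eq_zero hA.measurableSet ha))
    fun ν hνA hν => hμ ν hνA (kernelEnergy_le_of_mapClusterPt_empiricalMeasure hK hsymm hlim hν)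

end EmpiricalMeasure

lemma energy_eq_of_potential_eq {t : ℕ} {f : ℝ≥0 → ℝ≥0∞} {A : Set (EuclideanSpace ℝ (Fin t))}
    {μ : Measure (EuclideanSpace ℝ (Fin t))} [IsProbabilityMeasure μ] (hμA : μ Aᶜ = 0)
    {W : ℝ≥0∞} (hW : ∀ x ∈ A, potential f μ x = W) : energy f μ = W := by
  have : potential f μ =ᵐ[μ] fun _ => W := mem_of_superset (mem_ae_iff.2 hμA) hW
  simp [energy, lintegral_congr_ae this]

theorem greedy_points_equidistribute
    {t : ℕ} (A : Set (EuclideanSpace ℝ (Fin t))) (hA : IsCompact A)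
    (f : ℝ≥0 → ℝ≥0∞) (hf : LowerSemicontinuous f)
    (μeq : Measure (EuclideanSpace ℝ (Fin t))) (hμeq : IsProbabilityMeasure μeq)
    (hμeqA : μeq Aᶜ = 0)
    (hA1 : ∃ μ : Measure (EuclideanSpace ℝ (Fin t)),
      IsProbabilityMeasure μ ∧ μ Aᶜ = 0 ∧ energy f μ < ⊤)
    (hA2min : ∀ ν : Measure (EuclideanSpace ℝ (Fin t)),
      IsProbabilityMeasure ν → ν Aᶜ = 0 → energy f μeq ≤ energy f ν)
    (hA2uniq : ∀ ν : Measure (EuclideanSpace ℝ (Fin t)),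
      IsProbabilityMeasure ν → ν Aᶜ = 0 → energy f ν = energy f μeq → ν = μeq)
    (hA3 : ∀ x ∈ A, ∀ U : Set (EuclideanSpace ℝ (Fin t)), IsOpen U → x ∈ U → 0 < μeq U)
    (W : ℝ≥0∞) (hW : 0 < W) (hA4 : ∀ x ∈ A, potential f μeq x = W)
    (a : ℕ → EuclideanSpace ℝ (Fin t)) (ha : ∀ n, a n ∈ A)
    (hgreedy : ∀ n : ℕ, 1 ≤ n →
      (n : ℝ≥0∞)⁻¹ * ∑ i : Fin n, f (nndist (a n) (a i)) =
        polarization f A (fun i : Fin n => a i))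
    (hlim : Tendsto (fun n : ℕ => (n : ℝ≥0∞)⁻¹ * ∑ i : Fin n, f (nndist (a n) (a i)))
      atTop (𝓝 W)) :
    WeaklyTendsto (fun N => countingMeasure (fun i : Fin N => a (i : ℕ))) μeq := by
  have henergy : energy f μeq = W := energy_eq_of_potential_eq hμeqA hA4
  have hconv : Tendsto (empiricalMeasure a) atTop (𝓝 ⟨μeq, hμeq⟩) :=
    greedy_points_equidistribute_general (K := fun x y => f (nndist x y)) (μ := ⟨μeq, hμeq⟩)
      hA (hf.comp continuous_nndist) (fun x y => by rw [nndist_comm])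
      (fun ν hνA hν => Subtype.ext <| hA2uniq ν inferInstance hνA <|
        le_antisymm hν (hA2min ν inferInstance hνA)) ha
      (by simpa only [Finset.sum_range] using! (hlim.limsup_eq.trans henergy.symm).le)
  exact fun g => (tendsto_add_atTop_iff_nat 1).1
    (ProbabilityMeasure.tendsto_iff_forall_integral_tendsto.1 hconv g)
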